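/- Let X be an m×n complex matrix of rank r. Then there exist a vector γ ∈ ℂᵐ, an r×m complex matrix L, and an r×n complex matrix R, with L and R both of rank r, such that X = Δ_m(γ) Lᴴ R and ‖γ‖₂ · ‖L‖_c · ‖R‖_c = ‖T_X‖. -/

import Mathlib

open Matrix BigOperators

/-- The ℓ²→ℓ² operator norm of a complex matrix. -/
noncomputable def opNorm {m n : ℕ} (A : Matrix (Fin m) (Fin n) ℂ) : ℝ :=
  ‖(Matrix.toEuclideanLin A).toContinuousLinearMap‖

/-- The Euclidean norm of a complex vector. -/
noncomputable def eNorm {n : ℕ} (ξ : Fin n → ℂ) : ℝ :=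
  Real.sqrt (∑ j, ‖ξ j‖ ^ 2)

/-- The column norm: the maximum Euclidean norm of a column. -/
noncomputable def colNorm {l m : ℕ} (L : Matrix (Fin l) (Fin m) ℂ) : ℝ :=
  ⨆ j : Fin m, Real.sqrt (∑ i, ‖L i j‖ ^ 2)

/-- The norm of the bilinear map `T_X : (a, B) ↦ (∑_i a_i X_{ij} B_{ij})_j`, the
supremum over `max_i |a_i| ≤ 1` and `‖B‖_∞ ≤ 1` of `‖T_X(a,B)‖₂`. -/
noncomputable def TxNorm {m n : ℕ} (X : Matrix (Fin m) (Fin n) ℂ) : ℝ :=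
  ⨆ p : {p : (Fin m → ℂ) × Matrix (Fin m) (Fin n) ℂ //
      (∀ i, ‖p.1 i‖ ≤ 1) ∧ opNorm p.2 ≤ 1},
    eNorm (fun j => ∑ i, p.1.1 i * X i j * p.1.2 i j)

/-!
Let `xⱼ` be the columns of `X` and choose a subprobability vector `p` maximising
`p ↦ tr √(∑ⱼ pⱼ xⱼ xⱼᴴ)`; write `W` for the square root at the maximiser and `τ` for its trace.
Moving mass towards a single column `xⱼ` does not increase the functional, and to first order this
says that `|uᴴxⱼ|² ≤ τ uᴴWu` for all `u`, that is, `xⱼᴴW⁻¹xⱼ ≤ τ` when `X` has full row rank (in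
general, compress to the range of `X`). So in `X = √W (√W⁻¹X)` the left factor has squared
Frobenius norm `τ` and the columns of the right factor have squared norm at most `τ`. Normalising
the rows of the left factor gives `γ` and `L` with `‖γ‖₂ ‖L‖_c ‖R‖_c ≤ τ`. On the other hand,
`V = X diag(√p)` satisfies `V Vᴴ = W²`, so `VᴴW⁻¹` is a contraction pairing with `V` to `tr W = τ`,
whence `τ ≤ ‖T_X‖`; and `‖T_X‖ ≤ ‖γ‖₂ ‖L‖_c ‖R‖_c` for every factorisation.
-/

open scoped ComplexOrder MatrixOrder Matrix.Norms.L2Operator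

section Norms

variable {l m n : Type*} [Fintype l] [Fintype m] [Fintype n]

lemma star_dotProduct_self (v : n → ℂ) : star v ⬝ᵥ v = ((∑ i, ‖v i‖ ^ 2 : ℝ) : ℂ) := by
  simp only [dotProduct, Pi.star_apply, Complex.star_def, Complex.conj_mul', Complex.ofReal_sum,
    Complex.ofReal_pow]

lemma conjTranspose_mul_self_apply_self {n : Type*} (A : Matrix m n ℂ) (j : n) :
    (Aᴴ * A) j j = ((∑ i, ‖A i j‖ ^ 2 : ℝ) : ℂ) :=
  star_dotProduct_self fun i => A i j

lemma mul_conjTranspose_self_apply_self {m : Type*} (A : Matrix m n ℂ) (i : m) :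
    (A * Aᴴ) i i = ((∑ j, ‖A i j‖ ^ 2 : ℝ) : ℂ) := by
  simpa using conjTranspose_mul_self_apply_self Aᴴ i

lemma sq_norm_dotProduct_le (v w : n → ℂ) :
    ‖v ⬝ᵥ w‖ ^ 2 ≤ (∑ i, ‖v i‖ ^ 2) * ∑ i, ‖w i‖ ^ 2 := by
  calc ‖v ⬝ᵥ w‖ ^ 2 ≤ (∑ i, ‖v i‖ * ‖w i‖) ^ 2 := by
        gcongr
        exact (norm_sum_le _ _).trans_eq (by simp only [norm_mul])
    _ ≤ _ := Finset.sum_mul_sq_le_sq_mul_sq _ _ _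

/-- The square of the Frobenius (Hilbert–Schmidt) norm. -/
noncomputable def frobeniusSq (A : Matrix m n ℂ) : ℝ := ∑ i, ∑ j, ‖A i j‖ ^ 2

lemma frobeniusSq_nonneg (A : Matrix m n ℂ) : 0 ≤ frobeniusSq A :=
  Finset.sum_nonneg fun _ _ => Finset.sum_nonneg fun _ _ => sq_nonneg _

lemma trace_mul_conjTranspose_self (A : Matrix m n ℂ) : (A * Aᴴ).trace = frobeniusSq A := by
  simp only [Matrix.trace, diag_apply, mul_conjTranspose_self_apply_self, frobeniusSq,
    Complex.ofReal_sum]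

lemma l2_opNorm_le_one_iff [DecidableEq n] {A : Matrix m n ℂ} : ‖A‖ ≤ 1 ↔ Aᴴ * A ≤ 1 := by
  rw [← CStarAlgebra.norm_le_one_iff_of_nonneg _ (posSemidef_conjTranspose_mul_self A).nonneg,
    l2_opNorm_conjTranspose_mul_self, ← sq, sq_le_one_iff₀ (norm_nonneg A)]

lemma l2_opNorm_mul_le_one [DecidableEq m] [DecidableEq n] {A : Matrix l m ℂ} {B : Matrix m n ℂ}
    (hA : ‖A‖ ≤ 1) (hB : ‖B‖ ≤ 1) : ‖A * B‖ ≤ 1 :=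
  (l2_opNorm_mul A B).trans (mul_le_one₀ hA (norm_nonneg B) hB)

lemma l2_opNorm_transpose_le_one [DecidableEq m] [DecidableEq n] {A : Matrix m n ℂ}
    (hA : ‖A‖ ≤ 1) : ‖Aᵀ‖ ≤ 1 := by
  rw [← l2_opNorm_conjTranspose, l2_opNorm_le_one_iff, Matrix.le_iff] at hA
  rw [l2_opNorm_le_one_iff, Matrix.le_iff]
  have h : 1 - Aᵀᴴ * Aᵀ = (1 - Aᴴᴴ * Aᴴ)ᵀ := by
    rw [transpose_sub, transpose_one, transpose_mul, conjTranspose_conjTranspose]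
    rfl
  exact h ▸ hA.transpose

lemma sum_sq_norm_col_le_one [DecidableEq n] {A : Matrix m n ℂ} (hA : ‖A‖ ≤ 1) (j : n) :
    ∑ i, ‖A i j‖ ^ 2 ≤ 1 := by
  have h := (Matrix.le_iff.1 (l2_opNorm_le_one_iff.1 hA)).diag_nonneg (i := j)
  rw [Matrix.sub_apply, one_apply_eq, conjTranspose_mul_self_apply_self, sub_nonneg] at h
  exact_mod_cast h

lemma frobeniusSq_mul_le [DecidableEq m] {K : Matrix l m ℂ} (hK : ‖K‖ ≤ 1) (A : Matrix m n ℂ) :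
    frobeniusSq (K * A) ≤ frobeniusSq A := by
  have h := (Matrix.le_iff.1 (l2_opNorm_le_one_iff.1 hK)).conjTranspose_mul_mul_same A
    |>.trace_nonneg
  rw [Matrix.mul_sub, Matrix.sub_mul, Matrix.mul_one, trace_sub, sub_nonneg,
    trace_mul_comm Aᴴ A, trace_mul_conjTranspose_self, ← Matrix.mul_assoc Aᴴ, ← conjTranspose_mul,
    Matrix.mul_assoc, trace_mul_comm, trace_mul_conjTranspose_self] at h
  exact_mod_cast h

end Norms

section Trace

variable {m n : Type*} [Fintype m] [Fintype n] [DecidableEq m]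

lemma norm_trace_mul_le_sum_norm_row (Z : Matrix m n ℂ) {C : Matrix n m ℂ} (hC : ‖C‖ ≤ 1) :
    ‖(Z * C).trace‖ ≤ ∑ i, √(∑ j, ‖Z i j‖ ^ 2) := by
  refine (norm_sum_le _ _).trans (Finset.sum_le_sum fun i _ => Real.le_sqrt_of_sq_le ?_)
  calc ‖(Z * C) i i‖ ^ 2 ≤ (∑ j, ‖Z i j‖ ^ 2) * ∑ j, ‖C j i‖ ^ 2 := sq_norm_dotProduct_le _ _
    _ ≤ ∑ j, ‖Z i j‖ ^ 2 :=
      mul_le_of_le_one_right (Finset.sum_nonneg fun _ _ => sq_nonneg _)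
        (sum_sq_norm_col_le_one hC i)

-- In an eigenbasis of `W`, the `i`-th row of `Z` has norm equal to the `i`-th eigenvalue.
lemma norm_trace_mul_le_trace {W : Matrix m m ℂ} (hW : W.PosSemidef) {Z : Matrix m n ℂ}
    (hZ : Z * Zᴴ = W * W) {C : Matrix n m ℂ} (hC : ‖C‖ ≤ 1) : ‖(Z * C).trace‖ ≤ W.trace.re := by
  set U : Matrix m m ℂ := ↑hW.isHermitian.eigenvectorUnitary
  set ev := hW.isHermitian.eigenvalues
  have hUU : U * Uᴴ = 1 := Unitary.coe_mul_star_self hW.isHermitian.eigenvectorUnitary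
  have hU : ‖U‖ ≤ 1 := l2_opNorm_le_one_iff.2
    (Unitary.coe_star_mul_self hW.isHermitian.eigenvectorUnitary).le
  have hdiag : Uᴴ * W * U = diagonal fun i => (ev i : ℂ) := by
    simpa [Unitary.conjStarAlgAut_apply, star_eq_conjTranspose, Function.comp_def] using
      hW.isHermitian.conjStarAlgAut_star_eigenvectorUnitary
  have hrow (i : m) : ∑ j, ‖(Uᴴ * Z) i j‖ ^ 2 = ev i ^ 2 := by
    have hgram : (Uᴴ * Z) * (Uᴴ * Z)ᴴ = (Uᴴ * W * U) * (Uᴴ * W * U) := by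
      calc (Uᴴ * Z) * (Uᴴ * Z)ᴴ = Uᴴ * (Z * Zᴴ) * U := by
            simp only [conjTranspose_mul, conjTranspose_conjTranspose, Matrix.mul_assoc]
        _ = Uᴴ * (W * (U * Uᴴ) * W) * U := by rw [hZ, hUU, Matrix.mul_one]
        _ = (Uᴴ * W * U) * (Uᴴ * W * U) := by simp only [Matrix.mul_assoc]
    have hii := congrFun (congrFun hgram i) i
    rw [mul_conjTranspose_self_apply_self, hdiag, diagonal_mul_diagonal, diagonal_apply_eq] at hii
    rw [sq]
    exact_mod_cast hii
  calc ‖(Z * C).trace‖ = ‖((Uᴴ * Z) * (C * U)).trace‖ := by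
        rw [Matrix.mul_assoc, trace_mul_comm Uᴴ, Matrix.mul_assoc, Matrix.mul_assoc, hUU,
          Matrix.mul_one]
    _ ≤ ∑ i, √(∑ j, ‖(Uᴴ * Z) i j‖ ^ 2) :=
      norm_trace_mul_le_sum_norm_row _ (l2_opNorm_mul_le_one hC hU)
    _ = ∑ i, ev i := Finset.sum_congr rfl fun i _ => by
      rw [hrow, Real.sqrt_sq (hW.eigenvalues_nonneg i)]
    _ = W.trace.re := by
      rw [hW.isHermitian.trace_eq_sum_eigenvalues, Complex.re_sum]
      rfl

end Trace

section Maximizer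

variable {m n : Type*} [Fintype n]

/-- The set of subprobability vectors, over which `traceSqrt X` is maximised. Total mass at most
one, rather than equal to one, keeps the set nonempty when `n` is empty. -/
def subprobabilitySimplex (n : Type*) [Fintype n] : Set (n → ℝ) :=
  {p | 0 ≤ p ∧ ∑ j, p j ≤ 1}

lemma isCompact_subprobabilitySimplex : IsCompact (subprobabilitySimplex n) := by
  have hclosed : IsClosed (subprobabilitySimplex n) :=
    isClosed_Ici.inter <|
      isClosed_le (f := fun p : n → ℝ => ∑ j, p j) (by fun_prop) continuous_const
  refine (isCompact_Icc (a := 0) (b := 1)).of_isClosed_subset hclosed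
    fun p hp => ⟨hp.1, fun j => ?_⟩
  exact (Finset.single_le_sum (fun i _ => hp.1 i) (Finset.mem_univ j)).trans hp.2

lemma convex_subprobabilitySimplex : Convex ℝ (subprobabilitySimplex n) :=
  (convex_Ici 0).inter (convex_halfSpace_le (f := fun p : n → ℝ => ∑ j, p j)
    ⟨fun _ _ => Finset.sum_add_distrib, fun _ _ => Finset.mul_sum .. |>.symm⟩ 1)

variable [DecidableEq n]

lemma single_mem_subprobabilitySimplex (j : n) : Pi.single j 1 ∈ subprobabilitySimplex n :=
  ⟨Pi.single_nonneg.2 zero_le_one, by simp⟩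

/-- The Gram matrix `∑ⱼ pⱼ xⱼ xⱼᴴ` of the columns `xⱼ` of `X` with weights `p`. -/
noncomputable def weightedGram (X : Matrix m n ℂ) (p : n → ℝ) : Matrix m m ℂ :=
  X * diagonal (fun j => (p j : ℂ)) * Xᴴ

variable {X : Matrix m n ℂ} {p : n → ℝ}

lemma weightedGram_apply (X : Matrix m n ℂ) (p : n → ℝ) (i k : m) :
    weightedGram X p i k = ∑ j, p j * (X i j * star (X k j)) := by
  rw [weightedGram, mul_apply]
  refine Finset.sum_congr rfl fun j _ => ?_
  rw [mul_diagonal, conjTranspose_apply]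
  ring

lemma weightedGram_mix_single (X : Matrix m n ℂ) (p : n → ℝ) (a b : ℝ) (j : n) :
    weightedGram X (a • p + b • Pi.single j 1) =
      (a : ℂ) • weightedGram X p + (b : ℂ) • vecMulVec (X.col j) (star (X.col j)) := by
  ext i k
  simp [weightedGram_apply, vecMulVec_apply, Pi.single_apply, add_mul, Finset.sum_add_distrib,
    Finset.mul_sum, mul_assoc, apply_ite Complex.ofReal]

lemma weightedGram_posSemidef [Finite m] (X : Matrix m n ℂ) (hp : 0 ≤ p) :
    (weightedGram X p).PosSemidef :=
  (posSemidef_diagonal_iff.2 fun j => Complex.zero_le_real.2 (hp j)).mul_mul_conjTranspose_same X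

variable [Fintype m] [DecidableEq m]

/-- The functional `p ↦ tr √(∑ⱼ pⱼ xⱼ xⱼᴴ)`, whose maximum over subprobability vectors is the norm
of `T_X`. -/
noncomputable def traceSqrt (X : Matrix m n ℂ) (p : n → ℝ) : ℝ :=
  (CFC.sqrt (weightedGram X p)).trace.re

lemma exists_isMaxOn_traceSqrt (X : Matrix m n ℂ) :
    ∃ p ∈ subprobabilitySimplex n, IsMaxOn (traceSqrt X) (subprobabilitySimplex n) p := by
  refine isCompact_subprobabilitySimplex.exists_isMaxOn ⟨0, by simp [subprobabilitySimplex]⟩ ?_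
  have hgram : Continuous (weightedGram X) := by unfold weightedGram; fun_prop
  have hsqrt : ContinuousOn (fun p => CFC.sqrt (weightedGram X p)) (subprobabilitySimplex n) :=
    CFC.continuousOn_sqrt.comp hgram.continuousOn
      fun p hp => (weightedGram_posSemidef X hp.1).nonneg
  have htrace : Continuous fun W : Matrix m m ℂ => W.trace.re := by fun_prop
  exact htrace.comp_continuousOn hsqrt

lemma norm_sq_add_norm_sq_le_of_forall {a b : ℂ} {t : ℝ}
    (h : ∀ c s : ℂ, ‖c‖ ^ 2 + ‖s‖ ^ 2 = 1 → ‖c * a + s * b‖ ≤ t) : ‖a‖ ^ 2 + ‖b‖ ^ 2 ≤ t ^ 2 := by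
  obtain ⟨N, hN, hNsq⟩ : ∃ N : ℝ, 0 ≤ N ∧ N ^ 2 = ‖a‖ ^ 2 + ‖b‖ ^ 2 :=
    ⟨√(‖a‖ ^ 2 + ‖b‖ ^ 2), Real.sqrt_nonneg _, Real.sq_sqrt (by positivity)⟩
  rw [← hNsq]
  obtain rfl | hpos := hN.eq_or_lt
  · exact (zero_pow two_ne_zero).trans_le (sq_nonneg t)
  have hunit : ‖star a / N‖ ^ 2 + ‖star b / N‖ ^ 2 = 1 := by
    rw [norm_div, norm_div, norm_star, norm_star, Complex.norm_real, Real.norm_of_nonneg hN,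
      div_pow, div_pow, ← add_div, ← hNsq, div_self (pow_pos hpos 2).ne']
  have hval : star a / N * a + star b / N * b = N := by
    rw [div_mul_eq_mul_div, div_mul_eq_mul_div, ← add_div,
      div_eq_iff (Complex.ofReal_ne_zero.2 hpos.ne'), ← sq]
    simp only [Complex.star_def, Complex.conj_mul']
    exact_mod_cast hNsq.symm
  have hle := h _ _ hunit
  rw [hval, Complex.norm_real, Real.norm_of_nonneg hN] at hle
  gcongr

-- Test `|c|² p + |s|² δⱼ` against `p`: its Gram matrix is `Z Zᴴ` with `Z = [cW | sxⱼ]`, and pairing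
-- `Z` with the contraction of rows `A` and `wᴴ` gives a lower bound for `traceSqrt`.
lemma norm_trace_sq_add_norm_sq_le_of_isMaxOn (hp : p ∈ subprobabilitySimplex n)
    (hmax : IsMaxOn (traceSqrt X) (subprobabilitySimplex n) p) (j : n)
    {A : Matrix m m ℂ} {w : m → ℂ} (hAw : Aᴴ * A + vecMulVec w (star w) ≤ 1) :
    ‖(CFC.sqrt (weightedGram X p) * A).trace‖ ^ 2 + ‖star w ⬝ᵥ X.col j‖ ^ 2 ≤
      traceSqrt X p ^ 2 := by
  refine norm_sq_add_norm_sq_le_of_forall fun c s hcs => ?_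
  set W := CFC.sqrt (weightedGram X p)
  have hWh : Wᴴ = W := (CFC.sqrt_nonneg _).posSemidef.isHermitian
  have hWW : W * W = weightedGram X p :=
    CFC.sqrt_mul_sqrt_self _ (weightedGram_posSemidef X hp.1).nonneg
  set q : n → ℝ := ‖c‖ ^ 2 • p + ‖s‖ ^ 2 • Pi.single j 1
  have hq : q ∈ subprobabilitySimplex n := convex_subprobabilitySimplex hp
    (single_mem_subprobabilitySimplex j) (sq_nonneg _) (sq_nonneg _) hcs
  set Z := fromCols (c • W) (s • replicateCol Unit (X.col j))
  set C := fromRows A (replicateRow Unit (star w))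
  have hC : ‖C‖ ≤ 1 := by
    rw [l2_opNorm_le_one_iff, conjTranspose_fromRows_eq_fromCols_conjTranspose,
      fromCols_mul_fromRows, conjTranspose_replicateRow, star_star, ← vecMulVec_eq]
    exact hAw
  have hZ : Z * Zᴴ = weightedGram X q := by
    rw [weightedGram_mix_single, ← hWW, conjTranspose_fromCols_eq_fromRows_conjTranspose,
      fromCols_mul_fromRows, conjTranspose_smul, conjTranspose_smul, hWh,
      conjTranspose_replicateCol, smul_mul_smul_comm, Matrix.smul_mul, Matrix.mul_smul, smul_smul,
      ← vecMulVec_eq]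
    simp only [Complex.star_def, Complex.mul_conj', Complex.ofReal_pow]
  have hZC : (Z * C).trace = c * (W * A).trace + s * (star w ⬝ᵥ X.col j) := by
    rw [fromCols_mul_fromRows, trace_add, Matrix.smul_mul, Matrix.smul_mul, trace_smul, trace_smul,
      ← vecMulVec_eq, trace_vecMulVec, dotProduct_comm]
    rfl
  rw [← hZC]
  refine (norm_trace_mul_le_trace (CFC.sqrt_nonneg (weightedGram X q)).posSemidef ?_ hC).trans
    (hmax hq)
  rw [hZ, CFC.sqrt_mul_sqrt_self _ (weightedGram_posSemidef X hq.1).nonneg]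

-- To first order in `w wᴴ`, the matrix `1 - κ w wᴴ` is the defect operator `√(1 - w wᴴ)`.
lemma conjTranspose_mul_self_add_vecMulVec_le_one {w : m → ℂ} (hw : ∑ i, ‖w i‖ ^ 2 ≤ 1) {κ : ℝ}
    (hκ : κ = (1 + ∑ i, ‖w i‖ ^ 2) / 2) :
    (1 - κ • vecMulVec w (star w))ᴴ * (1 - κ • vecMulVec w (star w)) +
      vecMulVec w (star w) ≤ 1 := by
  set N := ∑ i, ‖w i‖ ^ 2
  set P := vecMulVec w (star w)
  have hP : P.PosSemidef := posSemidef_vecMulVec_self_star w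
  have hPP : P * P = N • P := by
    rw [vecMulVec_mul_vecMulVec, star_dotProduct_self, vecMulVec_smul]
    rfl
  have hN : 0 ≤ N := by positivity
  have hcoeff : 0 ≤ 2 * κ - 1 - κ ^ 2 * N := by
    rw [hκ]
    nlinarith [mul_nonneg hN (sub_nonneg.2 hw), mul_nonneg hN hN]
  have hdiff : 1 - ((1 - κ • P)ᴴ * (1 - κ • P) + P) = (2 * κ - 1 - κ ^ 2 * N) • P := by
    rw [conjTranspose_sub, conjTranspose_smul, hP.isHermitian, conjTranspose_one, star_trivial,
      sub_mul, mul_sub, mul_sub, smul_mul_smul_comm, hPP]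
    simp only [one_mul, mul_one]
    module
  rw [Matrix.le_iff, hdiff]
  exact hP.smul hcoeff

lemma norm_dotProduct_col_sq_le_of_sum_le_one (hp : p ∈ subprobabilitySimplex n)
    (hmax : IsMaxOn (traceSqrt X) (subprobabilitySimplex n) p) (j : n) {w : m → ℂ}
    (hw : ∑ i, ‖w i‖ ^ 2 ≤ 1) :
    ‖star w ⬝ᵥ X.col j‖ ^ 2 ≤ (1 + ∑ i, ‖w i‖ ^ 2) *
      (traceSqrt X p * (star w ⬝ᵥ CFC.sqrt (weightedGram X p) *ᵥ w).re) := by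
  obtain ⟨κ, hκ⟩ : ∃ κ : ℝ, κ = (1 + ∑ i, ‖w i‖ ^ 2) / 2 := ⟨_, rfl⟩
  have h := norm_trace_sq_add_norm_sq_le_of_isMaxOn hp hmax j
    (conjTranspose_mul_self_add_vecMulVec_le_one hw hκ)
  set W := CFC.sqrt (weightedGram X p)
  have hre : (W * (1 - κ • vecMulVec w (star w))).trace.re =
      traceSqrt X p - κ * (star w ⬝ᵥ W *ᵥ w).re := by
    rw [Matrix.mul_sub, Matrix.mul_smul, Matrix.mul_one, trace_sub, trace_smul,
      mul_vecMulVec, trace_vecMulVec, dotProduct_comm, Complex.sub_re, Complex.smul_re]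
    rfl
  have hsq := (sq_le_sq₀ (abs_nonneg _) (norm_nonneg _)).2
    (Complex.abs_re_le_norm (W * (1 - κ • vecMulVec w (star w))).trace)
  rw [sq_abs, hre] at hsq
  rw [show 1 + ∑ i, ‖w i‖ ^ 2 = 2 * κ by rw [hκ]; ring]
  nlinarith [sq_nonneg (κ * (star w ⬝ᵥ W *ᵥ w).re)]

-- Apply the previous bound to `t • u` and let `t → 0`.
lemma norm_dotProduct_col_sq_le (hp : p ∈ subprobabilitySimplex n)
    (hmax : IsMaxOn (traceSqrt X) (subprobabilitySimplex n) p) (j : n) (u : m → ℂ) :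
    ‖star u ⬝ᵥ X.col j‖ ^ 2 ≤
      traceSqrt X p * (star u ⬝ᵥ CFC.sqrt (weightedGram X p) *ᵥ u).re := by
  set N := ∑ i, ‖u i‖ ^ 2
  set b := traceSqrt X p * (star u ⬝ᵥ CFC.sqrt (weightedGram X p) *ᵥ u).re
  have hscale {t : ℝ} (ht : t ≠ 0) (htN : t ^ 2 * N ≤ 1) :
      ‖star u ⬝ᵥ X.col j‖ ^ 2 ≤ (1 + t ^ 2 * N) * b := by
    have hnorm : ∑ i, ‖(t • u) i‖ ^ 2 = t ^ 2 * N := by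
      simp only [Pi.smul_apply, norm_smul, mul_pow, Real.norm_eq_abs, sq_abs, ← Finset.mul_sum, N]
    have h := norm_dotProduct_col_sq_le_of_sum_le_one hp hmax j (hnorm.trans_le htN)
    rw [hnorm, star_smul, star_trivial, smul_dotProduct, smul_dotProduct, mulVec_smul,
      dotProduct_smul, norm_smul, Complex.smul_re, Complex.smul_re, mul_pow, Real.norm_eq_abs,
      sq_abs] at h
    refine le_of_mul_le_mul_left (h.trans_eq ?_) (sq_pos_of_ne_zero ht)
    simp only [smul_eq_mul, b]
    ring
  have hcont : Continuous fun t : ℝ => (1 + t ^ 2 * N) * b := by fun_prop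
  have hlim : Filter.Tendsto (fun t => (1 + t ^ 2 * N) * b) (nhdsWithin 0 {0}ᶜ) (nhds b) := by
    simpa using hcont.continuousAt.tendsto.mono_left (nhdsWithin_le_nhds (a := 0) (s := {0}ᶜ))
  have hsmall : ∀ᶠ t in nhds (0 : ℝ), t ^ 2 * N ≤ 1 :=
    (Continuous.tendsto' (by fun_prop) 0 0 (by simp)).eventually_le_const zero_lt_one
  refine ge_of_tendsto hlim ?_
  filter_upwards [self_mem_nhdsWithin, nhdsWithin_le_nhds hsmall] with t ht htN
  exact hscale ht htN

end Maximizer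

section Compression

variable {m n : Type*} [Fintype m] [Fintype n]

lemma exists_isometry_range (X : Matrix m n ℂ) :
    ∃ U : Matrix m (Fin X.rank) ℂ, Uᴴ * U = 1 ∧ U * (Uᴴ * X) = X := by
  classical
  let V := LinearMap.range (toEuclideanLin X)
  have hV : Module.finrank ℂ V = X.rank :=
    (X.rank_eq_finrank_range_toLin (EuclideanSpace.basisFun m ℂ).toBasis
      (EuclideanSpace.basisFun n ℂ).toBasis).symm
  let b : OrthonormalBasis (Fin X.rank) ℂ V := (stdOrthonormalBasis ℂ V).reindex (finCongr hV)
  let U : Matrix m (Fin X.rank) ℂ := of fun i k => (b k : EuclideanSpace ℂ m) i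
  refine ⟨U, ?_, ?_⟩
  · ext k l
    rw [one_apply, ← orthonormal_iff_ite.1 b.orthonormal k l]
    simp [mul_apply, U, PiLp.inner_apply, mul_comm]
  · ext i j
    let x : EuclideanSpace ℂ m := toEuclideanLin X (EuclideanSpace.single j 1)
    have hx (i : m) : x i = X i j := by simp [x, toLpLin_apply]
    have hsum := congrArg (fun v : V => (v : EuclideanSpace ℂ m) i)
      (b.sum_repr' ⟨x, LinearMap.mem_range_self _ _⟩)
    simp only [hx] at hsum
    rw [← hsum]
    simp [mul_apply, U, PiLp.inner_apply, hx, mul_comm]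

lemma linearIndependent_row_of_rank_eq_card {X : Matrix m n ℂ} (h : X.rank = Fintype.card m) :
    LinearIndependent ℂ X.row :=
  linearIndependent_iff_card_eq_finrank_span.2 (h.symm.trans X.rank_eq_finrank_span_row)

end Compression

section Certificate

variable {m n : Type*} [Fintype m] [Fintype n] [DecidableEq m] [DecidableEq n]
  {X : Matrix m n ℂ} {p : n → ℝ}

lemma posDef_sqrt_weightedGram (hX : LinearIndependent ℂ X.row)
    (hp : p ∈ subprobabilitySimplex n)
    (hmax : IsMaxOn (traceSqrt X) (subprobabilitySimplex n) p) :
    (CFC.sqrt (weightedGram X p)).PosDef := by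
  have hW := (CFC.sqrt_nonneg (weightedGram X p)).posSemidef
  refine .of_dotProduct_mulVec_pos hW.isHermitian fun u hu =>
    (hW.dotProduct_mulVec_nonneg u).lt_of_ne' fun h0 => hu ?_
  have hcol (j : n) : star u ⬝ᵥ X.col j = 0 := by
    have h := norm_dotProduct_col_sq_le hp hmax j u
    rw [h0, Complex.zero_re, mul_zero] at h
    exact norm_eq_zero.1 (pow_eq_zero_iff two_ne_zero |>.1 (h.antisymm (sq_nonneg _)))
  have hstar : star u ᵥ* X = 0 ᵥ* X := by
    rw [zero_vecMul]
    exact funext hcol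
  exact star_eq_zero.1 (vecMul_injective_iff.2 hX hstar)

lemma dotProduct_inv_sqrt_weightedGram_le (hX : LinearIndependent ℂ X.row)
    (hp : p ∈ subprobabilitySimplex n)
    (hmax : IsMaxOn (traceSqrt X) (subprobabilitySimplex n) p) (j : n) :
    (star (X.col j) ⬝ᵥ (CFC.sqrt (weightedGram X p))⁻¹ *ᵥ X.col j).re ≤ traceSqrt X p := by
  have hW := posDef_sqrt_weightedGram hX hp hmax
  have h := norm_dotProduct_col_sq_le hp hmax j ((CFC.sqrt (weightedGram X p))⁻¹ *ᵥ X.col j)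
  have hτ : 0 ≤ traceSqrt X p := (Complex.nonneg_iff.1 hW.posSemidef.trace_nonneg).1
  set W := CFC.sqrt (weightedGram X p)
  set q := star (X.col j) ⬝ᵥ W⁻¹ *ᵥ X.col j
  have hq : 0 ≤ q.re := (Complex.nonneg_iff.1 (hW.inv.posSemidef.dotProduct_mulVec_nonneg _)).1
  have hu : star (W⁻¹ *ᵥ X.col j) ⬝ᵥ X.col j = q := by
    rw [star_mulVec, hW.inv.isHermitian, ← dotProduct_mulVec]
  rw [mulVec_mulVec, Matrix.mul_nonsing_inv _ ((isUnit_iff_isUnit_det W).1 hW.isUnit), one_mulVec,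
    hu] at h
  have hqq : q.re ^ 2 ≤ traceSqrt X p * q.re :=
    (sq_abs q.re ▸ pow_le_pow_left₀ (abs_nonneg _) (Complex.abs_re_le_norm q) 2).trans h
  nlinarith

lemma exists_contraction_trace_eq_traceSqrt (hp : p ∈ subprobabilitySimplex n)
    (hW : (CFC.sqrt (weightedGram X p)).PosDef) :
    ∃ (η : n → ℂ) (C : Matrix n m ℂ), ∑ j, ‖η j‖ ^ 2 ≤ 1 ∧ ‖C‖ ≤ 1 ∧
      (X * diagonal η * C).trace = traceSqrt X p := by
  have hWW : CFC.sqrt (weightedGram X p) * CFC.sqrt (weightedGram X p) = weightedGram X p :=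
    CFC.sqrt_mul_sqrt_self _ (weightedGram_posSemidef X hp.1).nonneg
  set W := CFC.sqrt (weightedGram X p)
  set η : n → ℂ := fun j => √(p j)
  set V := X * diagonal η
  have hVV : V * Vᴴ = W * W := by
    rw [hWW, weightedGram, conjTranspose_mul, diagonal_conjTranspose, ← Matrix.mul_assoc,
      Matrix.mul_assoc X, diagonal_mul_diagonal]
    congr! 4 with j
    simp only [η, Pi.star_apply, Complex.star_def, Complex.conj_ofReal]
    exact_mod_cast Real.mul_self_sqrt (hp.1 j)
  have hdet : IsUnit W.det := (isUnit_iff_isUnit_det W).1 hW.isUnit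
  refine ⟨η, Vᴴ * W⁻¹, ?_, ?_, ?_⟩
  · refine (Finset.sum_congr rfl fun j _ => ?_).trans_le hp.2
    rw [Complex.norm_real, Real.norm_eq_abs, sq_abs, Real.sq_sqrt (hp.1 j)]
  · refine l2_opNorm_le_one_iff.2 (le_of_eq ?_)
    calc (Vᴴ * W⁻¹)ᴴ * (Vᴴ * W⁻¹) = W⁻¹ * (V * Vᴴ) * W⁻¹ := by
          rw [conjTranspose_mul, conjTranspose_conjTranspose, hW.inv.isHermitian]
          simp only [Matrix.mul_assoc]
      _ = (W⁻¹ * W) * (W * W⁻¹) := by rw [hVV]; simp only [Matrix.mul_assoc]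
      _ = 1 := by rw [nonsing_inv_mul _ hdet, mul_nonsing_inv _ hdet, mul_one]
  · rw [← Matrix.mul_assoc, hVV, Matrix.mul_assoc, mul_nonsing_inv _ hdet, Matrix.mul_one]
    exact Complex.ext rfl (Complex.nonneg_iff.1 hW.posSemidef.trace_nonneg).2.symm

lemma exists_mul_eq_of_posDef {m n : Type*} [Fintype m] [DecidableEq m]
    {W : Matrix m m ℂ} (hW : W.PosDef) (X : Matrix m n ℂ) :
    ∃ (S : Matrix m m ℂ) (R : Matrix m n ℂ), X = S * R ∧ frobeniusSq S = W.trace.re ∧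
      ∀ j, ∑ k, ‖R k j‖ ^ 2 = (star (X.col j) ⬝ᵥ W⁻¹ *ᵥ X.col j).re := by
  set S := CFC.sqrt W
  have hSS : S * S = W := CFC.sqrt_mul_sqrt_self W hW.posSemidef.nonneg
  have hSh : Sᴴ = S := (CFC.sqrt_nonneg W).posSemidef.isHermitian
  have hdet : IsUnit S.det := by
    refine isUnit_of_mul_isUnit_left (y := S.det) ?_
    rw [← det_mul, hSS]
    exact (isUnit_iff_isUnit_det W).1 hW.isUnit
  refine ⟨S, S⁻¹ * X, (mul_nonsing_inv_cancel_left S X hdet).symm, ?_, fun j => ?_⟩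
  · rw [← Complex.ofReal_re (frobeniusSq S), ← trace_mul_conjTranspose_self, hSh, hSS]
  · have hgram : (S⁻¹ * X)ᴴ * (S⁻¹ * X) = Xᴴ * (W⁻¹ * X) := by
      rw [conjTranspose_mul, conjTranspose_nonsing_inv, hSh, ← hSS, Matrix.mul_inv_rev]
      simp only [Matrix.mul_assoc]
    rw [← Complex.ofReal_re (∑ k, _), ← conjTranspose_mul_self_apply_self, hgram]
    rfl

theorem exists_factorization_with_trace_certificate (X : Matrix m n ℂ) :
    ∃ (τ : ℝ) (D : Matrix m (Fin X.rank) ℂ) (R : Matrix (Fin X.rank) n ℂ) (η : n → ℂ)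
      (C : Matrix n m ℂ), X = D * R ∧ frobeniusSq D ≤ τ ∧ (∀ j, ∑ k, ‖R k j‖ ^ 2 ≤ τ) ∧
      ∑ j, ‖η j‖ ^ 2 ≤ 1 ∧ ‖C‖ ≤ 1 ∧ (X * diagonal η * C).trace = τ := by
  obtain ⟨U, hUU, hUX⟩ := exists_isometry_range X
  set Z := Uᴴ * X
  have hU : ‖U‖ ≤ 1 := l2_opNorm_le_one_iff.2 hUU.le
  have hZ : LinearIndependent ℂ Z.row := by
    refine linearIndependent_row_of_rank_eq_card (le_antisymm Z.rank_le_card_height ?_)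
    rw [Fintype.card_fin]
    calc X.rank = (U * Z).rank := by rw [hUX]
      _ ≤ Z.rank := rank_mul_le_right U Z
  obtain ⟨p, hp, hmax⟩ := exists_isMaxOn_traceSqrt Z
  have hW := posDef_sqrt_weightedGram hZ hp hmax
  obtain ⟨S, R, hSR, hS, hR⟩ := exists_mul_eq_of_posDef hW Z
  obtain ⟨η, C, hη, hC, htrace⟩ := exists_contraction_trace_eq_traceSqrt hp hW
  refine ⟨traceSqrt Z p, U * S, R, η, C * Uᴴ, ?_, ?_, fun j => ?_, hη, ?_, ?_⟩
  · rw [Matrix.mul_assoc, ← hSR, hUX]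
  · exact (frobeniusSq_mul_le hU S).trans_eq hS
  · exact (hR j).trans_le (dotProduct_inv_sqrt_weightedGram_le hZ hp hmax j)
  · exact l2_opNorm_mul_le_one hC ((l2_opNorm_conjTranspose U).trans_le hU)
  · rw [← htrace, ← Matrix.mul_assoc, trace_mul_comm, ← Matrix.mul_assoc, ← Matrix.mul_assoc]

end Certificate

section TxNorm

variable {m n r : ℕ}

lemma opNorm_eq_l2_opNorm (A : Matrix (Fin m) (Fin n) ℂ) : opNorm A = ‖A‖ := rfl

lemma colNorm_nonneg (L : Matrix (Fin m) (Fin n) ℂ) : 0 ≤ colNorm L :=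
  Real.iSup_nonneg fun _ => Real.sqrt_nonneg _

lemma sum_sq_norm_col_le_sq_colNorm (L : Matrix (Fin m) (Fin n) ℂ) (j : Fin n) :
    ∑ i, ‖L i j‖ ^ 2 ≤ colNorm L ^ 2 :=
  (Real.sqrt_le_left (colNorm_nonneg L)).1 <|
    le_ciSup (f := fun j => √(∑ i, ‖L i j‖ ^ 2)) (Set.finite_range _).bddAbove j

lemma colNorm_le_sqrt {L : Matrix (Fin m) (Fin n) ℂ} {c : ℝ} (h : ∀ j, ∑ i, ‖L i j‖ ^ 2 ≤ c) :
    colNorm L ≤ √c :=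
  Real.iSup_le (fun j => Real.sqrt_le_sqrt (h j)) (Real.sqrt_nonneg c)

lemma diag_transpose_mul_diagonal_mul (a : Fin m → ℂ) (B X : Matrix (Fin m) (Fin n) ℂ) :
    (Bᵀ * diagonal a * X).diag = fun j => ∑ i, a i * X i j * B i j := by
  ext j
  rw [diag_apply, mul_apply]
  refine Finset.sum_congr rfl fun i _ => ?_
  rw [mul_diagonal, transpose_apply]
  ring

lemma eNorm_diag_mul_mul_le {K : Matrix (Fin n) (Fin m) ℂ} (hK : ‖K‖ ≤ 1)
    (D : Matrix (Fin m) (Fin r) ℂ) (R : Matrix (Fin r) (Fin n) ℂ) :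
    eNorm (K * (D * R)).diag ≤ √(frobeniusSq D) * colNorm R := by
  refine Real.sqrt_le_iff.2 ⟨mul_nonneg (Real.sqrt_nonneg _) (colNorm_nonneg R), ?_⟩
  rw [mul_pow, Real.sq_sqrt (frobeniusSq_nonneg D), ← Matrix.mul_assoc]
  calc ∑ j, ‖(K * D * R).diag j‖ ^ 2
      ≤ ∑ j, (∑ k, ‖(K * D) j k‖ ^ 2) * colNorm R ^ 2 := Finset.sum_le_sum fun j _ =>
        (sq_norm_dotProduct_le _ _).trans <| mul_le_mul_of_nonneg_left
          (sum_sq_norm_col_le_sq_colNorm R j) (Finset.sum_nonneg fun _ _ => sq_nonneg _)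
    _ = frobeniusSq (K * D) * colNorm R ^ 2 := (Finset.sum_mul ..).symm
    _ ≤ frobeniusSq D * colNorm R ^ 2 := by
      gcongr
      exact frobeniusSq_mul_le hK D

lemma eNorm_Tx_mul_le (D : Matrix (Fin m) (Fin r) ℂ) (R : Matrix (Fin r) (Fin n) ℂ)
    {a : Fin m → ℂ} {B : Matrix (Fin m) (Fin n) ℂ} (ha : ∀ i, ‖a i‖ ≤ 1) (hB : opNorm B ≤ 1) :
    eNorm (fun j => ∑ i, a i * (D * R) i j * B i j) ≤ √(frobeniusSq D) * colNorm R := by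
  have hdiag : ‖diagonal a‖ ≤ 1 :=
    (l2_opNorm_diagonal a).trans_le ((pi_norm_le_iff_of_nonneg zero_le_one).2 ha)
  rw [opNorm_eq_l2_opNorm] at hB
  rw [← diag_transpose_mul_diagonal_mul]
  exact eNorm_diag_mul_mul_le (l2_opNorm_mul_le_one (l2_opNorm_transpose_le_one hB) hdiag) D R

lemma TxNorm_mul_le (D : Matrix (Fin m) (Fin r) ℂ) (R : Matrix (Fin r) (Fin n) ℂ) :
    TxNorm (D * R) ≤ √(frobeniusSq D) * colNorm R :=
  Real.iSup_le (fun p => eNorm_Tx_mul_le D R p.2.1 p.2.2)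
    (mul_nonneg (Real.sqrt_nonneg _) (colNorm_nonneg R))

lemma eNorm_Tx_le_TxNorm (X : Matrix (Fin m) (Fin n) ℂ) {a : Fin m → ℂ}
    {B : Matrix (Fin m) (Fin n) ℂ} (ha : ∀ i, ‖a i‖ ≤ 1) (hB : opNorm B ≤ 1) :
    eNorm (fun j => ∑ i, a i * X i j * B i j) ≤ TxNorm X := by
  refine le_ciSup (f := fun p : {p : (Fin m → ℂ) × Matrix (Fin m) (Fin n) ℂ //
    (∀ i, ‖p.1 i‖ ≤ 1) ∧ opNorm p.2 ≤ 1} => eNorm fun j => ∑ i, p.1.1 i * X i j * p.1.2 i j)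
    ⟨√(frobeniusSq (1 : Matrix (Fin m) (Fin m) ℂ)) * colNorm X, ?_⟩ ⟨(a, B), ha, hB⟩
  rintro _ ⟨⟨⟨a, B⟩, ha, hB⟩, rfl⟩
  simpa only [Matrix.one_mul] using eNorm_Tx_mul_le 1 X ha hB

lemma norm_trace_mul_diagonal_mul_le_TxNorm (X : Matrix (Fin m) (Fin n) ℂ) {η : Fin n → ℂ}
    (hη : ∑ j, ‖η j‖ ^ 2 ≤ 1) {C : Matrix (Fin n) (Fin m) ℂ} (hC : ‖C‖ ≤ 1) :
    ‖(X * diagonal η * C).trace‖ ≤ TxNorm X := by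
  have htrace : (X * diagonal η * C).trace = η ⬝ᵥ (C * X).diag := by
    rw [Matrix.mul_assoc, trace_mul_comm, Matrix.mul_assoc]
    simp only [Matrix.trace, diag_apply, diagonal_mul, dotProduct]
  have h := eNorm_Tx_le_TxNorm X (a := fun _ => 1) (fun _ => norm_one.le)
    ((opNorm_eq_l2_opNorm Cᵀ).trans_le (l2_opNorm_transpose_le_one hC))
  rw [← diag_transpose_mul_diagonal_mul, transpose_transpose, diagonal_one, Matrix.mul_one] at h
  refine (Real.le_sqrt_of_sq_le ?_).trans h
  rw [htrace]
  exact (sq_norm_dotProduct_le _ _).trans <|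
    mul_le_of_le_one_left (Finset.sum_nonneg fun _ _ => sq_nonneg _) hη

lemma frobeniusSq_diagonal_mul_conjTranspose (γ : Fin m → ℂ) (L : Matrix (Fin r) (Fin m) ℂ) :
    frobeniusSq (diagonal γ * Lᴴ) = ∑ i, ‖γ i‖ ^ 2 * ∑ k, ‖L k i‖ ^ 2 := by
  simp only [frobeniusSq, diagonal_mul, conjTranspose_apply, norm_mul, norm_star, mul_pow,
    Finset.mul_sum]

lemma sqrt_frobeniusSq_diagonal_mul_conjTranspose_le (γ : Fin m → ℂ)
    (L : Matrix (Fin r) (Fin m) ℂ) : √(frobeniusSq (diagonal γ * Lᴴ)) ≤ eNorm γ * colNorm L := by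
  refine Real.sqrt_le_iff.2 ⟨mul_nonneg (Real.sqrt_nonneg _) (colNorm_nonneg L), ?_⟩
  rw [frobeniusSq_diagonal_mul_conjTranspose, mul_pow, eNorm,
    Real.sq_sqrt (Finset.sum_nonneg fun _ _ => sq_nonneg _), Finset.sum_mul]
  gcongr with i
  exact sum_sq_norm_col_le_sq_colNorm L i

lemma TxNorm_diagonal_mul_le (γ : Fin m → ℂ) (L : Matrix (Fin r) (Fin m) ℂ)
    (R : Matrix (Fin r) (Fin n) ℂ) :
    TxNorm (diagonal γ * (Lᴴ * R)) ≤ eNorm γ * colNorm L * colNorm R := by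
  rw [← Matrix.mul_assoc]
  exact (TxNorm_mul_le _ R).trans <| mul_le_mul_of_nonneg_right
    (sqrt_frobeniusSq_diagonal_mul_conjTranspose_le γ L) (colNorm_nonneg R)

lemma exists_eq_diagonal_mul_conjTranspose (D : Matrix (Fin m) (Fin r) ℂ) :
    ∃ (γ : Fin m → ℂ) (L : Matrix (Fin r) (Fin m) ℂ), D = diagonal γ * Lᴴ ∧
      eNorm γ = √(frobeniusSq D) ∧ colNorm L ≤ 1 := by
  set g : Fin m → ℝ := fun i => √(∑ k, ‖D i k‖ ^ 2)
  have hg (i : Fin m) : g i ^ 2 = ∑ k, ‖D i k‖ ^ 2 :=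
    Real.sq_sqrt (Finset.sum_nonneg fun _ _ => sq_nonneg _)
  refine ⟨fun i => g i, of fun k i => star (D i k) / g i, ?_, ?_, ?_⟩
  · ext i k
    have hDg : g i = 0 → D i k = 0 := fun h0 => by
      have hle := Finset.single_le_sum (f := fun k => ‖D i k‖ ^ 2) (fun _ _ => sq_nonneg _)
        (Finset.mem_univ k)
      rw [← hg, h0, zero_pow two_ne_zero] at hle
      exact norm_eq_zero.1 (pow_eq_zero_iff two_ne_zero |>.1 (hle.antisymm (sq_nonneg _)))
    rw [diagonal_mul, conjTranspose_apply, of_apply, star_div₀, star_star, Complex.star_def,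
      Complex.conj_ofReal, mul_div_cancel_of_imp' fun h => hDg (Complex.ofReal_eq_zero.1 h)]
  · simp only [eNorm, frobeniusSq, Complex.norm_real, Real.norm_eq_abs, sq_abs, hg]
  · rw [← Real.sqrt_one]
    refine colNorm_le_sqrt fun i => ?_
    simp only [of_apply, norm_div, norm_star, Complex.norm_real, Real.norm_eq_abs, div_pow, sq_abs,
      ← Finset.sum_div, ← hg]
    exact div_self_le_one _

end TxNorm

/-- Norm optimal factorization for `T_X`: `X = Δ_m(γ) Lᴴ R` with `L`, `R` of the same
rank as `X` and `‖γ‖₂ ‖L‖_c ‖R‖_c = ‖T_X‖`. -/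
theorem exists_Tx_optimal_factorization
    (m n : ℕ) (X : Matrix (Fin m) (Fin n) ℂ) :
    ∃ (γ : Fin m → ℂ) (L : Matrix (Fin X.rank) (Fin m) ℂ) (R : Matrix (Fin X.rank) (Fin n) ℂ),
      L.rank = X.rank ∧ R.rank = X.rank ∧
      X = Matrix.diagonal γ * (Lᴴ * R) ∧
      eNorm γ * colNorm L * colNorm R = TxNorm X := by
  obtain ⟨τ, D, R, η, C, hXDR, hD, hR, hη, hC, htrace⟩ :=
    exists_factorization_with_trace_certificate X
  obtain ⟨γ, L, hDL, hγ, hL⟩ := exists_eq_diagonal_mul_conjTranspose D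
  have hX : X = diagonal γ * (Lᴴ * R) := by rw [← Matrix.mul_assoc, ← hDL, ← hXDR]
  have hrank : X.rank ≤ (Lᴴ * R).rank := (congrArg rank hX).trans_le (rank_mul_le_right _ _)
  have hτ : τ ≤ TxNorm X := by
    rw [← Complex.ofReal_re τ, ← htrace]
    exact (Complex.re_le_norm _).trans (norm_trace_mul_diagonal_mul_le_TxNorm X hη hC)
  refine ⟨γ, L, R, L.rank_le_height.antisymm ?_, R.rank_le_height.antisymm ?_, hX,
    le_antisymm ?_ ?_⟩
  · exact (hrank.trans (rank_mul_le_left _ _)).trans_eq (rank_conjTranspose L)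
  · exact hrank.trans (rank_mul_le_right _ _)
  · calc eNorm γ * colNorm L * colNorm R ≤ √τ * 1 * √τ := by
          rw [hγ]
          gcongr
          exacts [colNorm_nonneg R, colNorm_nonneg L, colNorm_le_sqrt hR]
      _ = τ := by rw [mul_one, Real.mul_self_sqrt ((frobeniusSq_nonneg D).trans hD)]
      _ ≤ TxNorm X := hτ
  · exact (congrArg TxNorm hX).trans_le (TxNorm_diagonal_mul_le γ L R)
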